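/- The dual lexicographic excellence solution R^DL satisfies WIVIP and strong slide independence (SSI); moreover, if |X| ≥ 3, R^DL does not satisfy independence from the worst set (IWS). -/

import Mathlib

/-!
Social ranking solutions (SRSs).  The set of individuals is a finite type `X`;
coalitions are elements of `Finset X` (so the domain of a power relation is the
whole power set `𝔛 = 2^X`).  A weak order `≿ ∈ ℛ(𝔛)` is encoded as a relation
`r : Finset X → Finset X → Prop` together with (when needed) its list of
equivalence classes `L = [Σ₁, …, Σ_l]` in strictly decreasing order
(`IsClassList r L`).
-/

namespace SocialRanking

variable {X : Type*} [Fintype X] [DecidableEq X]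

/-- A weak order: a reflexive, complete and transitive binary relation. -/
def IsWeakOrder {A : Type*} (r : A → A → Prop) : Prop :=
  Reflexive r ∧ (∀ a b, r a b ∨ r b a) ∧ Transitive r

/-- A social ranking solution maps every weak order on `2^X` to a weak order on `X`. -/
def IsSRS (R : (Finset X → Finset X → Prop) → X → X → Prop) : Prop :=
  ∀ r, IsWeakOrder r → IsWeakOrder (R r)

/-- `IsClassList r L` : `L = [Σ₁, …, Σ_l]` is the list of the equivalence classes of
the weak order `r` on `2^X`, in strictly decreasing order (`≿ : Σ₁ ≻ ⋯ ≻ Σ_l`):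
every class is nonempty, every coalition lies in exactly one class, and
`S ≿ T ↔ i ≤ j` whenever `S ∈ Σᵢ` and `T ∈ Σⱼ` (0-based indices). -/
def IsClassList (r : Finset X → Finset X → Prop) (L : List (Finset (Finset X))) : Prop :=
  (∀ C ∈ L, C.Nonempty) ∧
  (∀ S : Finset X, ∃! i : ℕ, i < L.length ∧ S ∈ L.getD i ∅) ∧
  (∀ i j : ℕ, i < L.length → j < L.length →
    ∀ S ∈ L.getD i ∅, ∀ T ∈ L.getD j ∅, (r S T ↔ i ≤ j))

/-- The asymmetric (strict) part `P` of a relation. -/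
def StrictPart {A : Type*} (p : A → A → Prop) (a b : A) : Prop := p a b ∧ ¬ p b a

/-- The symmetric part `I` (indifference) of a relation. -/
def IndiffPart {A : Type*} (p : A → A → Prop) (a b : A) : Prop := p a b ∧ p b a

/-- The restrictions of `p` and `q` to `{x, y}` coincide. -/
def AgreeOn (p q : X → X → Prop) (x y : X) : Prop :=
  ∀ a ∈ ({x, y} : Set X), ∀ b ∈ ({x, y} : Set X), (p a b ↔ q a b)

/-- `|Δ[x]|` : the number of coalitions in `Δ` containing `x`. -/
def count (Δ : Finset (Finset X)) (x : X) : ℕ := (Δ.filter (fun S => x ∈ S)).card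

/-! ### Independence axioms and further axioms -/

/-- WIVIP: for a dichotomous `≿ : Σ₁ ≻ Σ₂`, any `x ∈ ⋂Σ₁` is socially strictly above
any `y ∉ ⋂Σ₁`. -/
def WIVIP (R : (Finset X → Finset X → Prop) → X → X → Prop) : Prop :=
  ∀ (r : Finset X → Finset X → Prop) (C₁ C₂ : Finset (Finset X)),
    IsClassList r [C₁, C₂] →
    ∀ x y : X, (∀ S ∈ C₁, x ∈ S) → (∃ S ∈ C₁, y ∉ S) →
    StrictPart (R r) x y

/-- IWS (independence from the worst set): if `≿ : Σ₁ ≻ ⋯ ≻ Σ_{l-1} ≻ Σ_l` (`l ≥ 2`)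
and `≿'` is obtained from `≿` by partitioning the worst class `Σ_l` into ordered
classes `Γ₁ ≻' ⋯ ≻' Γ_{l'}`, then `x P_≿ y` implies `x P_≿' y`. -/
def IWS (R : (Finset X → Finset X → Prop) → X → X → Prop) : Prop :=
  ∀ (r r' : Finset X → Finset X → Prop) (L Γ : List (Finset (Finset X)))
    (W : Finset (Finset X)),
    L ≠ [] → IsClassList r (L ++ [W]) → IsClassList r' (L ++ Γ) →
    ∀ x y : X, StrictPart (R r) x y → StrictPart (R r') x y

/-- IBS (independence from the best set): if `≿ : Σ₁ ≻ Σ₂ ≻ ⋯ ≻ Σ_l` (`l ≥ 2`)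
and `≿'` is obtained from `≿` by partitioning the best class `Σ₁` into ordered
classes `Γ₁ ≻' ⋯ ≻' Γ_{l'}`, then `x P_≿ y` implies `x P_≿' y`. -/
def IBS (R : (Finset X → Finset X → Prop) → X → X → Prop) : Prop :=
  ∀ (r r' : Finset X → Finset X → Prop) (B : Finset (Finset X))
    (L Γ : List (Finset (Finset X))),
    L ≠ [] → IsClassList r (B :: L) → IsClassList r' (Γ ++ L) →
    ∀ x y : X, StrictPart (R r) x y → StrictPart (R r') x y

/-- TO (tops-only): two weak orders with the same best equivalence class get the
same social ranking. -/
def TO (R : (Finset X → Finset X → Prop) → X → X → Prop) : Prop :=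
  ∀ (r r' : Finset X → Finset X → Prop) (B : Finset (Finset X))
    (L L' : List (Finset (Finset X))),
    IsClassList r (B :: L) → IsClassList r' (B :: L') → R r = R r'

/-- The class list obtained from `L` by sliding `Δ` out of class `k₁` into class `k₂`
(`Σ_{k₁}` is replaced by `Σ_{k₁} \ Δ` and `Σ_{k₂}` by `Σ_{k₂} ∪ Δ`; if `Δ = Σ_{k₁}`
the emptied class disappears). -/
def slide (L : List (Finset (Finset X))) (k₁ k₂ : ℕ) (Δ : Finset (Finset X)) :
    List (Finset (Finset X)) :=
  ((L.set k₁ ((L.getD k₁ ∅) \ Δ)).set k₂ ((L.getD k₂ ∅) ∪ Δ)).filter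
    (fun C => decide (C ≠ ∅))

/-- SI (slide independence): sliding a proper subfamily `Δ ⊊ Σ_{k₁}` with
`|Δ[x]| = |Δ[y]|` into another class does not change the social ranking on `{x, y}`. -/
def SI (R : (Finset X → Finset X → Prop) → X → X → Prop) : Prop :=
  ∀ (r r' : Finset X → Finset X → Prop) (L : List (Finset (Finset X)))
    (k₁ k₂ : ℕ) (x y : X) (Δ : Finset (Finset X)),
    IsClassList r L → k₁ < L.length → k₂ < L.length →
    Δ ⊂ L.getD k₁ ∅ → count Δ x = count Δ y →
    IsClassList r' (slide L k₁ k₂ Δ) →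
    AgreeOn (R r) (R r') x y

/-- SSI (strong slide independence): as SI, but `Δ ⊆ Σ_{k₁}` may be the whole class
(in which case the class disappears). -/
def SSI (R : (Finset X → Finset X → Prop) → X → X → Prop) : Prop :=
  ∀ (r r' : Finset X → Finset X → Prop) (L : List (Finset (Finset X)))
    (k₁ k₂ : ℕ) (x y : X) (Δ : Finset (Finset X)),
    IsClassList r L → k₁ < L.length → k₂ < L.length →
    Δ ⊆ L.getD k₁ ∅ → count Δ x = count Δ y →
    IsClassList r' (slide L k₁ k₂ Δ) →
    AgreeOn (R r) (R r') x y

/-- Top-SI: the condition of SI restricted to slides out of the best class (`k₁ = 1`,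
i.e. index `0`). -/
def TopSI (R : (Finset X → Finset X → Prop) → X → X → Prop) : Prop :=
  ∀ (r r' : Finset X → Finset X → Prop) (L : List (Finset (Finset X)))
    (k₂ : ℕ) (x y : X) (Δ : Finset (Finset X)),
    IsClassList r L → 0 < L.length → k₂ < L.length →
    Δ ⊂ L.getD 0 ∅ → count Δ x = count Δ y →
    IsClassList r' (slide L 0 k₂ Δ) →
    AgreeOn (R r) (R r') x y

/-- The class list of `≿' : Σ₁ ≻' ⋯ ≻' Σ_{k-1} ≻' Δ ≻' Σ_k \ Δ ≻' ⋯ ≻' Σ_l`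
(empty classes disappear). -/
def inuiList (L : List (Finset (Finset X))) (k : ℕ) (Δ : Finset (Finset X)) :
    List (Finset (Finset X)) :=
  (L.take k ++ [Δ, (L.getD k ∅) \ Δ] ++ L.drop (k + 1)).filter
    (fun C => decide (C ≠ ∅))

/-- INUI (independence of non-unanimous improvements). -/
def INUI (R : (Finset X → Finset X → Prop) → X → X → Prop) : Prop :=
  ∀ (r r' : Finset X → Finset X → Prop) (L : List (Finset (Finset X)))
    (k : ℕ) (Δ : Finset (Finset X)) (x y : X),
    IsClassList r L → k < L.length → Δ ⊆ L.getD k ∅ →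
    (∃ S ∈ Δ, x ∉ S) → (∃ S ∈ Δ, y ∉ S) →
    IsClassList r' (inuiList L k Δ) →
    AgreeOn (R r) (R r') x y

/-- The weak order `≿_π := {(π(S), π(T)) : S ≿ T}` induced by a permutation `π` of `X`. -/
def permRel (π : Equiv.Perm X) (r : Finset X → Finset X → Prop) :
    Finset X → Finset X → Prop :=
  fun A B => r (A.image π.symm) (B.image π.symm)

/-- NT (neutrality). -/
def NT (R : (Finset X → Finset X → Prop) → X → X → Prop) : Prop :=
  ∀ (π : Equiv.Perm X) (r : Finset X → Finset X → Prop), IsWeakOrder r →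
    ∀ x y : X, (R (permRel π r) (π x) (π y) ↔ R r x y)

/-- IIC (independence of irrelevant coalitions). -/
def IIC (R : (Finset X → Finset X → Prop) → X → X → Prop) : Prop :=
  ∀ (r r' : Finset X → Finset X → Prop), IsWeakOrder r → IsWeakOrder r' →
    ∀ x y : X,
      (∀ S : Finset X, x ∉ S → y ∉ S →
        (r (insert x S) (insert y S) ↔ r' (insert x S) (insert y S))) →
      (R r x y ↔ R r' x y)

/-! ### The social ranking solutions -/

/-- `θ_≿(x) = (|Σ₁[x]|, …, |Σ_l[x]|)`. -/
def theta (L : List (Finset (Finset X))) (x : X) : List ℕ := L.map (fun C => count C x)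

/-- The lexicographic order `a ≥^L b` on vectors of naturals. -/
def GeLex (a b : List ℕ) : Prop :=
  a = b ∨ ∃ k < a.length, (∀ j < k, a.getD j 0 = b.getD j 0) ∧ b.getD k 0 < a.getD k 0

/-- The dual lexicographic order `a ≥^DL b` (read from the last coordinate;
fewer appearances in worse classes is better). -/
def GeDualLex (a b : List ℕ) : Prop :=
  a = b ∨ ∃ k < a.length, (∀ j, k < j → a.getD j 0 = b.getD j 0) ∧ a.getD k 0 < b.getD k 0

/-- The lexicographic excellence solution `R^L` : `x R^L_≿ y ↔ θ_≿(x) ≥^L θ_≿(y)`. -/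
def RL (r : Finset X → Finset X → Prop) (x y : X) : Prop :=
  ∀ L, IsClassList r L → GeLex (theta L x) (theta L y)

/-- The dual lexicographic excellence solution `R^DL`. -/
def RDL (r : Finset X → Finset X → Prop) (x y : X) : Prop :=
  ∀ L, IsClassList r L → GeDualLex (theta L x) (theta L y)

/-- Plurality `R^P` : `x R^P_≿ y ↔ |Σ₁[x]| ≥ |Σ₁[y]|`. -/
def RP (r : Finset X → Finset X → Prop) (x y : X) : Prop :=
  ∀ L, IsClassList r L → count (L.getD 0 ∅) y ≤ count (L.getD 0 ∅) x

/-- `e_≿(x)` : the largest `k` such that `x` belongs to every coalition of each of the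
first `k` equivalence classes (`0` if `x ∉ T₁`). -/
def eIIS (L : List (Finset (Finset X))) (x : X) : ℕ :=
  (L.takeWhile (fun C => decide (∀ S ∈ C, x ∈ S))).length

/-- The intersection initial segment rule `R^IIS` : `x R^IIS_≿ y ↔ e_≿(x) ≥ e_≿(y)`. -/
def RIIS (r : Finset X → Finset X → Prop) (x y : X) : Prop :=
  ∀ L, IsClassList r L → eIIS L y ≤ eIIS L x

/-- The constant-`X` rule: everybody is ranked indifferent. -/
def RconstX : (Finset X → Finset X → Prop) → X → X → Prop := fun _ _ _ => True

/-- The split-plurality score `s^split_≿(z) = ∑_{S ∈ Σ₁ : z ∈ S} 1/|S|`. -/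
def splitScore (C : Finset (Finset X)) (z : X) : ℚ :=
  ∑ S ∈ C.filter (fun S => z ∈ S), (1 : ℚ) / (S.card : ℚ)

/-- Split-plurality `R^splitP`. -/
def RsplitP (r : Finset X → Finset X → Prop) (x y : X) : Prop :=
  ∀ L, IsClassList r L → splitScore (L.getD 0 ∅) y ≤ splitScore (L.getD 0 ∅) x

/-- Plurality with tie-breaking by a linear order `t = ▷` :
`x R^{P,▷}_≿ y ↔ (x P^P_≿ y ∨ (x I^P_≿ y ∧ x ▷ y))`. -/
def RPtie (t : X → X → Prop) (r : Finset X → Finset X → Prop) (x y : X) : Prop :=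
  ∀ L, IsClassList r L →
    (count (L.getD 0 ∅) y < count (L.getD 0 ∅) x ∨
      (count (L.getD 0 ∅) x = count (L.getD 0 ∅) y ∧ t x y))

/-!
`R^DL` is decided by the worst class in which `x` and `y` appear with different frequencies; the
one appearing there less often wins. Equivalently, look at the list of differences
`|Σₖ[x]| - |Σₖ[y]|`, discard the zeros, and ask whether the last remaining entry is negative.

* WIVIP: every individual lies in equally many coalitions overall, so an individual with an
  advantage in `Σ₁` has the opposite disadvantage in `Σ₂`, the class that decides.
* SSI: sliding a family that is balanced between `x` and `y` alters no difference, and an emptied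
  class contributes a zero.
* IWS fails: in the worst class `{{y}, {y, z}, {x}}` the individual `x` appears less often than `y`,
  but once it is split into `{{y}, {y, z}} ≻ {{x}}` the new worst class decides the other way.
-/

section ClassList

variable {α : Type*} {r : Finset α → Finset α → Prop} {L L' : List (Finset (Finset α))}
  {S T : Finset α} {i j : ℕ}

theorem lt_length_of_mem_getD {β : Type*} {l : List (Finset β)} {b : β} (hb : b ∈ l.getD i ∅) :
    i < l.length := by
  by_contra hi
  rw [List.getD_eq_default _ _ (not_lt.1 hi)] at hb
  exact Finset.notMem_empty b hb

theorem IsClassList.exists_mem_getD (h : IsClassList r L) (S : Finset α) :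
    ∃ i, S ∈ L.getD i ∅ :=
  let ⟨i, ⟨_, hS⟩, _⟩ := h.2.1 S
  ⟨i, hS⟩

theorem IsClassList.exists_mem (h : IsClassList r L) (S : Finset α) : ∃ C ∈ L, S ∈ C := by
  obtain ⟨i, hS⟩ := h.exists_mem_getD S
  rw [List.getD_eq_getElem L ∅ (lt_length_of_mem_getD hS)] at hS
  exact ⟨_, List.getElem_mem _, hS⟩

theorem IsClassList.index_unique (h : IsClassList r L) (hi : S ∈ L.getD i ∅)
    (hj : S ∈ L.getD j ∅) : i = j :=
  (h.2.1 S).unique ⟨lt_length_of_mem_getD hi, hi⟩ ⟨lt_length_of_mem_getD hj, hj⟩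

theorem IsClassList.rel_iff_index_le (h : IsClassList r L) (hS : S ∈ L.getD i ∅)
    (hT : T ∈ L.getD j ∅) : r S T ↔ i ≤ j :=
  h.2.2 i j (lt_length_of_mem_getD hS) (lt_length_of_mem_getD hT) S hS T hT

theorem IsClassList.disjoint_getD (h : IsClassList r L) (hij : i ≠ j) :
    Disjoint (L.getD i ∅) (L.getD j ∅) :=
  Finset.disjoint_left.2 fun _ hi hj => hij (h.index_unique hi hj)

theorem IsClassList.mem_getD_iff_indiffPart (h : IsClassList r L) (hS : S ∈ L.getD i ∅) :
    T ∈ L.getD i ∅ ↔ IndiffPart r S T := by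
  obtain ⟨j, hT⟩ := h.exists_mem_getD T
  rw [IndiffPart, h.rel_iff_index_le hS hT, h.rel_iff_index_le hT hS, ← le_antisymm_iff]
  exact ⟨fun hT' => h.index_unique hT' hT, fun hij => hij ▸ hT⟩

theorem IsClassList.mem_iff (h : IsClassList r L) {C : Finset (Finset α)} :
    C ∈ L ↔ ∃ S, ∀ T, T ∈ C ↔ IndiffPart r S T := by
  constructor
  · intro hC
    obtain ⟨S, hS⟩ := h.1 C hC
    obtain ⟨i, hi, rfl⟩ := List.getElem_of_mem hC
    rw [← List.getD_eq_getElem L ∅ hi] at hS ⊢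
    exact ⟨S, fun T => h.mem_getD_iff_indiffPart hS⟩
  · rintro ⟨S, hC⟩
    obtain ⟨i, hS⟩ := h.exists_mem_getD S
    have hi := lt_length_of_mem_getD hS
    have hCi : C = L.getD i ∅ := by
      ext T
      rw [hC, h.mem_getD_iff_indiffPart hS]
    rw [hCi, List.getD_eq_getElem L ∅ hi]
    exact List.getElem_mem hi

/-- The strict order that a relation `p` induces on nonempty sets: every member of `A` is strictly
above every member of `B`. It makes a class list strictly sorted, hence determined by its members.
Nonemptiness is required to make the order asymmetric. -/
def StrictlyAbove {β : Type*} (p : β → β → Prop) (A B : Finset β) : Prop :=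
  A.Nonempty ∧ B.Nonempty ∧ ∀ a ∈ A, ∀ b ∈ B, StrictPart p a b

instance {β : Type*} (p : β → β → Prop) : Std.Asymm (StrictlyAbove p) where
  asymm := fun _ _ ⟨⟨a, ha⟩, ⟨b, hb⟩, hab⟩ ⟨_, _, hba⟩ => (hab a ha b hb).2 (hba b hb a ha).1

theorem IsClassList.pairwise_strictlyAbove (h : IsClassList r L) :
    L.Pairwise (StrictlyAbove r) := by
  refine List.pairwise_iff_getElem.2 fun i j hi hj hij =>
    ⟨h.1 _ (List.getElem_mem hi), h.1 _ (List.getElem_mem hj), fun S hS T hT => ?_⟩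
  rw [← List.getD_eq_getElem L ∅ hi] at hS
  rw [← List.getD_eq_getElem L ∅ hj] at hT
  rw [StrictPart, h.rel_iff_index_le hS hT, h.rel_iff_index_le hT hS]
  omega

theorem IsClassList.unique (h : IsClassList r L) (h' : IsClassList r L') : L = L' :=
  h.pairwise_strictlyAbove.eq_of_mem_iff h'.pairwise_strictlyAbove fun _ =>
    h.mem_iff.trans h'.mem_iff.symm

theorem exists_isClassList_of_pairwise_disjoint (hne : ∀ C ∈ L, C.Nonempty)
    (hdisj : L.Pairwise Disjoint) (hcover : ∀ S, ∃ C ∈ L, S ∈ C) : ∃ r, IsClassList r L := by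
  have hindex : ∀ S, ∃ i < L.length, S ∈ L.getD i ∅ := fun S => by
    obtain ⟨C, hC, hS⟩ := hcover S
    obtain ⟨i, hi, rfl⟩ := List.getElem_of_mem hC
    exact ⟨i, hi, by rwa [List.getD_eq_getElem L ∅ hi]⟩
  choose rank hrank hmem using hindex
  have hunique : ∀ S i, i < L.length → S ∈ L.getD i ∅ → i = rank S := fun S i hi hS => by
    have hS' := hmem S
    rw [List.getD_eq_getElem L ∅ hi] at hS
    rw [List.getD_eq_getElem L ∅ (hrank S)] at hS'
    rw [List.pairwise_iff_getElem] at hdisj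
    rcases lt_trichotomy i (rank S) with hlt | heq | hlt
    · exact absurd hS' (Finset.disjoint_left.1 (hdisj _ _ hi (hrank S) hlt) hS)
    · exact heq
    · exact absurd hS (Finset.disjoint_left.1 (hdisj _ _ (hrank S) hi hlt) hS')
  refine ⟨fun S T => rank S ≤ rank T, hne, fun S => ⟨rank S, ⟨hrank S, hmem S⟩, ?_⟩, ?_⟩
  · exact fun i hi => hunique S i hi.1 hi.2
  · intro i j hi hj S hS T hT
    rw [hunique S i hi hS, hunique T j hj hT]

end ClassList

section DualLex

theorem geDualLex_concat {a b : List ℕ} (hab : a.length = b.length) {m n : ℕ} :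
    GeDualLex (a ++ [m]) (b ++ [n]) ↔ m < n ∨ m = n ∧ GeDualLex a b := by
  have ha : (a ++ [m]).getD a.length 0 = m := by simp
  have hb : (b ++ [n]).getD a.length 0 = n := by simp [hab]
  have hinit : ∀ j < a.length, (a ++ [m]).getD j 0 = a.getD j 0 ∧
      (b ++ [n]).getD j 0 = b.getD j 0 := fun j hj =>
    ⟨List.getD_append _ _ _ _ hj, List.getD_append _ _ _ _ (hab ▸ hj)⟩
  have htail : ∀ j, a.length < j → (a ++ [m]).getD j 0 = (b ++ [n]).getD j 0 := fun j hj => by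
    rw [List.getD_eq_default _ _ (by simpa using hj),
      List.getD_eq_default _ _ (by simpa [← hab] using hj)]
  constructor
  · rintro (heq | ⟨k, hk, htie, hlt⟩)
    · obtain ⟨hinit_eq, hlast_eq⟩ := List.append_inj heq hab
      exact Or.inr ⟨List.singleton_inj.1 hlast_eq, Or.inl hinit_eq⟩
    · rw [List.length_append, List.length_singleton, Nat.lt_succ_iff_lt_or_eq] at hk
      rcases hk with hk | rfl
      · rw [(hinit k hk).1, (hinit k hk).2] at hlt
        refine Or.inr ⟨ha ▸ hb ▸ htie _ hk, Or.inr ⟨k, hk, fun j hj => ?_, hlt⟩⟩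
        rcases lt_or_ge j a.length with hja | hja
        · rw [← (hinit j hja).1, ← (hinit j hja).2, htie j hj]
        · rw [List.getD_eq_default _ _ hja, List.getD_eq_default _ _ (hab ▸ hja)]
      · exact Or.inl (ha ▸ hb ▸ hlt)
  · rintro (hlt | ⟨rfl, rfl | ⟨k, hk, htie, hlt⟩⟩)
    · exact Or.inr ⟨a.length, by simp, htail, by rwa [ha, hb]⟩
    · exact Or.inl rfl
    · refine Or.inr ⟨k, by simpa using hk.le, fun j hj => ?_, ?_⟩
      · rcases lt_trichotomy j a.length with hja | rfl | hja
        · rw [(hinit j hja).1, (hinit j hja).2, htie j hj]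
        · rw [ha, hb]
        · exact htail j hja
      · rwa [(hinit k hk).1, (hinit k hk).2]

variable {α : Type*} [DecidableEq α] {r : Finset α → Finset α → Prop}
  {L : List (Finset (Finset α))} {x y : α}

theorem geDualLex_theta_concat {W : Finset (Finset α)} :
    GeDualLex (theta (L ++ [W]) x) (theta (L ++ [W]) y) ↔
      count W x < count W y ∨ count W x = count W y ∧ GeDualLex (theta L x) (theta L y) := by
  simpa only [theta, List.map_append, List.map_cons, List.map_nil] using
    geDualLex_concat (by simp only [List.length_map])

theorem rdl_iff (h : IsClassList r L) : RDL r x y ↔ GeDualLex (theta L x) (theta L y) :=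
  ⟨fun hxy => hxy L h, fun hxy _ h' => h.unique h' ▸ hxy⟩

theorem strictPart_rdl_of_count_lt {W : Finset (Finset α)} (h : IsClassList r (L ++ [W]))
    (hlt : count W x < count W y) : StrictPart (RDL r) x y := by
  rw [StrictPart, rdl_iff h, rdl_iff h, geDualLex_theta_concat, geDualLex_theta_concat]
  omega

end DualLex

section Count

variable {α : Type*} [DecidableEq α] {Δ : Finset (Finset α)} {x y : α}

theorem count_union {A B : Finset (Finset α)} (h : Disjoint A B) (x : α) :
    count (A ∪ B) x = count A x + count B x := by
  rw [count, Finset.filter_union,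
    Finset.card_union_of_disjoint (Finset.disjoint_filter_filter h), count, count]

theorem count_sdiff_add_count {A B : Finset (Finset α)} (h : B ⊆ A) (x : α) :
    count (A \ B) x + count B x = count A x := by
  rw [← count_union Finset.sdiff_disjoint, Finset.sdiff_union_of_subset h]

theorem count_eq_card_iff : count Δ x = Δ.card ↔ ∀ S ∈ Δ, x ∈ S :=
  Finset.card_filter_eq_iff

theorem count_eq_zero_iff : count Δ x = 0 ↔ ∀ S ∈ Δ, x ∉ S :=
  Finset.card_filter_eq_zero_iff

theorem count_lt_count_of_forall_mem (hx : ∀ S ∈ Δ, x ∈ S) (hy : ∃ S ∈ Δ, y ∉ S) :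
    count Δ y < count Δ x := by
  rw [count_eq_card_iff.2 hx]
  refine lt_of_le_of_ne (Finset.card_filter_le _ _) fun hcard => ?_
  obtain ⟨S, hS, hyS⟩ := hy
  exact hyS (count_eq_card_iff.1 hcard S hS)

-- Transposing `x` and `y` maps the coalitions containing `x` onto those containing `y`.
theorem count_eq_count_of_forall_mem (hΔ : ∀ S, S ∈ Δ) (x y : α) : count Δ x = count Δ y :=
  Finset.card_equiv (Equiv.swap x y).finsetCongr (by simp [hΔ])

theorem wivip_rdl : WIVIP (X := α) RDL := by
  intro r C₁ C₂ h x y hx hy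
  have hdisj : Disjoint C₁ C₂ := h.disjoint_getD zero_ne_one
  have hcover : ∀ S, S ∈ C₁ ∪ C₂ := fun S => by simpa using h.exists_mem S
  have htotal : count C₁ x + count C₂ x = count C₁ y + count C₂ y := by
    rw [← count_union hdisj, ← count_union hdisj, count_eq_count_of_forall_mem hcover]
  have hbest : count C₁ y < count C₁ x := count_lt_count_of_forall_mem hx hy
  exact strictPart_rdl_of_count_lt (L := [C₁]) h (by omega)

end Count

section Margin

variable {α : Type*} [DecidableEq α] {L : List (Finset (Finset α))} {x y : α}
  {C Δ : Finset (Finset α)}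

/-- The difference `|C[x]| - |C[y]|`, taken in `ℤ`: how much more often `x` than `y` appears in the
family `C`. -/
def margin (x y : α) (C : Finset (Finset α)) : ℤ :=
  count C x - count C y

theorem margin_sdiff (hΔ : Δ ⊆ C) (hbal : count Δ x = count Δ y) :
    margin x y (C \ Δ) = margin x y C := by
  rw [margin, margin, ← count_sdiff_add_count hΔ x, ← count_sdiff_add_count hΔ y, hbal]
  push_cast
  ring

theorem margin_union (hΔ : Disjoint C Δ) (hbal : count Δ x = count Δ y) :
    margin x y (C ∪ Δ) = margin x y C := by
  rw [margin, margin, count_union hΔ, count_union hΔ, hbal]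
  push_cast
  ring

/-- The nonzero margins of `x` over `y` along the classes of `L`, from best to worst. Since zeros
are dropped, the list does not see empty classes. -/
def nonzeroMargins (L : List (Finset (Finset α))) (x y : α) : List ℤ :=
  (L.map (margin x y)).filter (· ≠ 0)

theorem geDualLex_theta_iff :
    GeDualLex (theta L x) (theta L y) ↔ ∀ d ∈ (nonzeroMargins L x y).getLast?, d < 0 := by
  induction L using List.reverseRecOn with
  | nil => simp [GeDualLex, theta, nonzeroMargins]
  | append_singleton L W ih =>
    rw [geDualLex_theta_concat, ih]
    by_cases hW : margin x y W = 0
    · have hcount : count W x = count W y := by simpa [margin, sub_eq_zero] using hW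
      simp [nonzeroMargins, hW, hcount]
    · have hcount : count W x ≠ count W y := by simpa [margin, sub_eq_zero] using hW
      have hlast : (nonzeroMargins (L ++ [W]) x y).getLast? = some (margin x y W) := by
        simp [nonzeroMargins, List.filter_append, hW]
      simp [hlast, hcount, margin]

theorem nonzeroMargins_filter_ne_empty :
    nonzeroMargins (L.filter (fun C => decide (C ≠ ∅))) x y = nonzeroMargins L x y := by
  rw [nonzeroMargins, nonzeroMargins, List.filter_map, List.filter_map, List.filter_filter]
  congr 1
  refine List.filter_congr fun C _ => ?_
  by_cases hC : C = ∅ <;> simp [hC, margin, count]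

theorem set_map_eq_map {β γ : Type*} {f : β → γ} {l : List β} {k : ℕ} {b d : β}
    (h : f b = f (l.getD k d)) : (l.map f).set k (f b) = l.map f := by
  rcases lt_or_ge k l.length with hk | hk
  · rw [h, List.getD_eq_getElem l d hk, ← List.map_set, List.set_getElem_self]
  · exact List.set_eq_of_length_le (by rwa [List.length_map])

theorem nonzeroMargins_slide {r : Finset α → Finset α → Prop} {k₁ k₂ : ℕ} (h : IsClassList r L)
    (hΔ : Δ ⊆ L.getD k₁ ∅) (hbal : count Δ x = count Δ y) :
    nonzeroMargins (slide L k₁ k₂ Δ) x y = nonzeroMargins L x y := by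
  have hsource : margin x y (L.getD k₁ ∅ \ Δ) = margin x y (L.getD k₁ ∅) := margin_sdiff hΔ hbal
  have htarget : margin x y (L.getD k₂ ∅ ∪ Δ) = margin x y (L.getD k₂ ∅) := by
    rcases eq_or_ne k₂ k₁ with rfl | hk
    · rw [Finset.union_eq_left.2 hΔ]
    · exact margin_union ((h.disjoint_getD hk).mono_right hΔ) hbal
  rw [slide, nonzeroMargins_filter_ne_empty, nonzeroMargins, nonzeroMargins, List.map_set,
    List.map_set, set_map_eq_map hsource, set_map_eq_map htarget]

theorem rdl_slide_iff {r r' : Finset α → Finset α → Prop} {k₁ k₂ : ℕ} (h : IsClassList r L)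
    (h' : IsClassList r' (slide L k₁ k₂ Δ)) (hΔ : Δ ⊆ L.getD k₁ ∅)
    (hbal : count Δ x = count Δ y) : RDL r x y ↔ RDL r' x y := by
  rw [rdl_iff h, rdl_iff h', geDualLex_theta_iff, geDualLex_theta_iff,
    nonzeroMargins_slide h hΔ hbal]

theorem ssi_rdl : SSI (X := α) RDL := by
  intro r r' L k₁ k₂ x y Δ h _ _ hΔ hbal h' a ha b hb
  have hab : count Δ a = count Δ b := by
    rcases ha with rfl | rfl <;> rcases hb with rfl | rfl <;> simp only [hbal]
  exact rdl_slide_iff h h' hΔ hab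

end Margin

theorem not_iws_rdl_of_count {α : Type*} [DecidableEq α] {B V U : Finset (Finset α)} {x y : α}
    (hne : ∀ C ∈ [B, V, U], C.Nonempty) (hdisj : [B, V, U].Pairwise Disjoint)
    (hcover : ∀ S, ∃ C ∈ [B, V, U], S ∈ C) (hmerged : count (V ∪ U) x < count (V ∪ U) y)
    (hsplit : count U y < count U x) : ¬ IWS (X := α) RDL := by
  intro hIWS
  obtain ⟨r, hr⟩ : ∃ r, IsClassList r [B, V ∪ U] := by
    apply exists_isClassList_of_pairwise_disjoint <;> simp_all
  obtain ⟨r', hr'⟩ : ∃ r', IsClassList r' [B, V, U] :=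
    exists_isClassList_of_pairwise_disjoint hne hdisj hcover
  have hxy : StrictPart (RDL r) x y := strictPart_rdl_of_count_lt (L := [B]) hr hmerged
  have hyx : StrictPart (RDL r') y x := strictPart_rdl_of_count_lt (L := [B, V]) hr' hsplit
  exact hyx.2 (hIWS r r' [B] [V, U] (V ∪ U) (List.cons_ne_nil _ _) hr hr' x y hxy).1

theorem not_iws_rdl (hcard : 3 ≤ Fintype.card X) : ¬ IWS (X := X) RDL := by
  obtain ⟨x, y, z, hxy, hxz, hyz⟩ := Fintype.two_lt_card_iff.1 hcard
  let V : Finset (Finset X) := {{y}, {y, z}}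
  let U : Finset (Finset X) := {{x}}
  let B : Finset (Finset X) := (V ∪ U)ᶜ
  have hVx : count V x = 0 := count_eq_zero_iff.2 (by simp [V, hxy, hxz])
  have hVy : count V y = 2 := by
    rw [count_eq_card_iff.2 (by simp [V])]
    exact Finset.card_pair fun h => hyz (by simpa [hyz.symm] using congrArg (z ∈ ·) h)
  have hUx : count U x = 1 := count_eq_card_iff.2 (by simp [U])
  have hUy : count U y = 0 := count_eq_zero_iff.2 (by simp [U, hxy.symm])
  have hVU : Disjoint V U :=
    Finset.disjoint_singleton_right.2 fun hx =>
      count_eq_zero_iff.1 hVx _ hx (Finset.mem_singleton_self x)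
  have hB : B.Nonempty := ⟨∅, by simp [B, V, U, eq_comm (a := (∅ : Finset X))]⟩
  have hBVU : Disjoint B V ∧ Disjoint B U := Finset.disjoint_union_right.1 disjoint_compl_left
  have hcover : ∀ S, S ∈ B ∨ S ∈ V ∨ S ∈ U := fun S => by
    rw [Finset.mem_compl, Finset.mem_union]
    exact (em _).symm
  refine not_iws_rdl_of_count (B := B) (V := V) (U := U) (x := x) (y := y) ?_ ?_ ?_ ?_ ?_
  · simp [hB, V, U]
  · simp [hBVU, hVU]
  · simpa using hcover
  · rw [count_union hVU, count_union hVU]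
    omega
  · omega

/-- The dual lexicographic excellence solution satisfies WIVIP and SSI; moreover if
`|X| ≥ 3` it does not satisfy IWS. -/
theorem duallexcel_props [Nonempty X] :
    (WIVIP (X := X) RDL ∧ SSI (X := X) RDL) ∧
      (3 ≤ Fintype.card X → ¬ IWS (X := X) RDL) :=
  ⟨⟨wivip_rdl, ssi_rdl⟩, not_iws_rdl⟩

end SocialRanking
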